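/- Let c, r ≥ 1 and n ≥ r. Then, as polynomials in x_1,…,x_n: s^{[n]}_{c^r} · s^{[2,n]}_{c^{r−1}} = s^{[n]}_{c^{r−1}} · s^{[2,n]}_{c^r} + x_1 · s^{[n]}_{(c−1)^r} · s^{[2,n]}_{(c+1)^{r−1}}. -/

import Mathlib

/-- A semistandard Young tableau of shape `(lam 0, lam 1, …, lam (k-1))` (so `lam i` is the
length of the `(i+1)`-st row), with entries in `{a, a+1, …, b}`: rows weakly increase,
columns strictly increase.  Entries outside the shape are `0`. -/
structure SSYT (k : ℕ) (lam : ℕ → ℤ) (a b : ℕ) where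
  entry : ℕ → ℕ → ℕ
  zero_outside : ∀ i j : ℕ, ¬(i < k ∧ (j : ℤ) < lam i) → entry i j = 0
  lower : ∀ i j : ℕ, i < k → (j : ℤ) < lam i → a ≤ entry i j
  upper : ∀ i j : ℕ, i < k → (j : ℤ) < lam i → entry i j ≤ b
  row_weak : ∀ i j₁ j₂ : ℕ, i < k → j₁ ≤ j₂ → (j₂ : ℤ) < lam i → entry i j₁ ≤ entry i j₂
  col_strict : ∀ i₁ i₂ j : ℕ, i₁ < i₂ → i₂ < k → (j : ℤ) < lam i₂ → entry i₁ j < entry i₂ j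

/-- The monomial `Π_i x_i^{m(i,T)}` of a tableau: the product of `x_{T(c)}` over the
cells `c` of the shape. -/
noncomputable def SSYT.weight {k : ℕ} {lam : ℕ → ℤ} {a b : ℕ} (T : SSYT k lam a b) :
    MvPolynomial ℕ ℤ :=
  ∏ i ∈ Finset.range k, ∏ j ∈ Finset.range (lam i).toNat, MvPolynomial.X (T.entry i j)

/-- `(lam 0, …, lam (k-1))` is a partition: weakly decreasing with nonnegative entries. -/
def IsPartitionSeq (k : ℕ) (lam : ℕ → ℤ) : Prop :=
  (∀ i, i + 1 < k → lam (i + 1) ≤ lam i) ∧ (∀ i, i < k → 0 ≤ lam i)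

/-- The Schur polynomial `s^{[a,b]}_lam = Σ_T Π_i x_i^{m(i,T)}`, the sum running over all
semistandard Young tableaux of shape `lam` with entries in `{a,…,b}`; by convention it is
`0` if `lam` is not a partition. -/
noncomputable def schur (k : ℕ) (lam : ℕ → ℤ) (a b : ℕ) : MvPolynomial ℕ ℤ :=
  letI := Classical.dec (IsPartitionSeq k lam)
  if IsPartitionSeq k lam then ∑ᶠ T : SSYT k lam a b, T.weight else 0

open Finset in
/-- Desnanot–Jacobi, block form, when the determinant is regular. -/
theorem desnanot_block_aux {R : Type*} [CommRing R] {m : Type*} [Fintype m] [DecidableEq m]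
    (M : Matrix (Fin 2 ⊕ m) (Fin 2 ⊕ m) R) (hM : IsLeftRegular M.det) :
    M.adjugate.toBlocks₁₁.det = M.det * M.toBlocks₂₂.det := by
  have h1 : M * Matrix.fromBlocks M.adjugate.toBlocks₁₁ 0 M.adjugate.toBlocks₂₁ (1 : Matrix m m R) =
      Matrix.fromBlocks (M.det • (1 : Matrix (Fin 2) (Fin 2) R)) M.toBlocks₁₂ 0 M.toBlocks₂₂ := by
    have h2 := Matrix.mul_adjugate M
    ext i j
    rcases j with j | j
    · have h3 : (M * M.adjugate) i (Sum.inl j) = (M.det • (1 : Matrix (Fin 2 ⊕ m) (Fin 2 ⊕ m) R)) i (Sum.inl j) := by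
        rw [h2]
      rw [Matrix.mul_apply] at h3 ⊢
      rw [Fintype.sum_sum_type] at h3 ⊢
      rcases i with i | i
      · simpa [Matrix.toBlocks₁₁, Matrix.toBlocks₂₁, Matrix.one_apply] using h3
      · simpa [Matrix.toBlocks₁₁, Matrix.toBlocks₂₁, Matrix.one_apply] using h3
    · rw [Matrix.mul_apply, Fintype.sum_sum_type]
      rcases i with i | i <;>
      simp [Matrix.toBlocks₁₂, Matrix.toBlocks₂₂, Matrix.one_apply]
  have h4 := congrArg Matrix.det h1
  rw [Matrix.det_mul, Matrix.det_fromBlocks_zero₁₂, Matrix.det_fromBlocks_zero₂₁] at h4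
  apply hM
  simp only [Matrix.det_one, mul_one, Matrix.det_smul, Fintype.card_fin] at h4
  simp only [h4]
  ring

theorem desnanot_block {R : Type*} [CommRing R] {m : Type*} [Fintype m] [DecidableEq m]
    (M : Matrix (Fin 2 ⊕ m) (Fin 2 ⊕ m) R) :
    M.adjugate.toBlocks₁₁.det = M.det * M.toBlocks₂₂.det := by
  let N : Matrix (Fin 2 ⊕ m) (Fin 2 ⊕ m) (Polynomial R) := (-M).charmatrix
  have hN : IsLeftRegular N.det := by
    have : Polynomial.Monic N.det := Matrix.charpoly_monic (-M)
    exact this.isRegular.left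
  let f : Polynomial R →+* R := Polynomial.evalRingHom 0
  have hf : f.mapMatrix N = M := by
    ext i j
    by_cases h : i = j
    · subst h; simp [N, f, Matrix.charmatrix_apply]
    · simp [N, f, Matrix.charmatrix_apply, h]
  have h := congrArg f (desnanot_block_aux N hN)
  rw [map_mul, RingHom.map_det, RingHom.map_det, RingHom.map_det, hf] at h
  have e1 : f.mapMatrix N.adjugate.toBlocks₁₁ = M.adjugate.toBlocks₁₁ := by
    rw [← hf, ← RingHom.map_adjugate]; rfl
  have e2 : f.mapMatrix N.toBlocks₂₂ = M.toBlocks₂₂ := by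
    rw [← hf]; rfl
  rw [e1, e2] at h
  exact h

/-- first, last, and the middle indices -/
def ends_fun (s : ℕ) : Fin 2 ⊕ Fin s → Fin (s + 2)
  | Sum.inl i => if i = 0 then 0 else Fin.last _
  | Sum.inr i => i.succ.castSucc

theorem ends_bij (s : ℕ) : Function.Bijective (ends_fun s) := by
  rw [Fintype.bijective_iff_injective_and_card]
  constructor
  · intro a b h
    rcases a with a | a <;> rcases b with b | b
    · fin_cases a <;> fin_cases b <;> simp_all [ends_fun, Fin.ext_iff]
    · fin_cases a <;> simp_all [ends_fun, Fin.ext_iff]; omega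
    · fin_cases b <;> simp_all [ends_fun, Fin.ext_iff]; omega
    · simp_all [ends_fun, Fin.ext_iff]
  · simp; omega

theorem desnanot {R : Type*} [CommRing R] (s : ℕ) (M : Matrix (Fin (s + 2)) (Fin (s + 2)) R) :
    M.det * (M.submatrix (fun i : Fin s => i.succ.castSucc) (fun i : Fin s => i.succ.castSucc)).det
    = (M.submatrix Fin.succ Fin.succ).det * (M.submatrix Fin.castSucc Fin.castSucc).det
      - (M.submatrix Fin.succ Fin.castSucc).det * (M.submatrix Fin.castSucc Fin.succ).det := by
  let e := Equiv.ofBijective _ (ends_bij s)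
  have h := desnanot_block (M.submatrix e e)
  rw [Matrix.det_submatrix_equiv_self, Matrix.adjugate_submatrix_equiv_self, Matrix.det_fin_two] at h
  have e0 : e (Sum.inl 0) = 0 := by simp [e, ends_fun]
  have e1 : e (Sum.inl 1) = Fin.last _ := by simp [e, ends_fun]
  have e2 : (M.submatrix e e).toBlocks₂₂ =
    M.submatrix (fun i : Fin s => i.succ.castSucc) (fun i : Fin s => i.succ.castSucc) := rfl
  rw [e2] at h
  rw [← h]
  simp only [Matrix.toBlocks₁₁, Matrix.of_apply, Matrix.submatrix_apply, e0, e1,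
    Matrix.adjugate_fin_succ_eq_det_submatrix]
  have z : (Fin.succAbove (0 : Fin (s+2))) = Fin.succ := by ext; simp
  have l : (Fin.succAbove (Fin.last (s+1))) = Fin.castSucc := by ext; simp
  rw [z, l]
  have hs : ((-1 : R) ^ (s+1)) * (-1) ^ (s+1) = 1 := by
    rw [← mul_pow]; simp
  simp only [Fin.val_zero, Fin.val_last, add_zero, zero_add, pow_zero, one_mul, pow_add] 
  simp only [pow_add] at hs
  linear_combination (-(M.submatrix Fin.succ Fin.castSucc).det * (M.submatrix Fin.castSucc Fin.succ).det
   + (M.submatrix Fin.succ Fin.succ).det * (M.submatrix Fin.castSucc Fin.castSucc).det) * hs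

/-- the Jacobi–Trudi determinant of a rectangle -/
noncomputable def rectDet {R : Type*} [CommRing R] (H : ℤ → R) (s : ℕ) (c : ℤ) : R :=
  Matrix.det (Matrix.of fun i j : Fin s => H (c - (i : ℕ) + (j : ℕ)))

theorem geom_det {R : Type*} [CommRing R] (H G : ℤ → R) (x : R)
    (hHG : ∀ m, H m = G m + x * H (m - 1)) (s : ℕ) (d : ℤ) (y : R)
    (M : Matrix (Fin (s + 1)) (Fin (s + 1)) R)
    (h0 : ∀ j, M 0 j = y * x ^ (j : ℕ))
    (h1 : ∀ (i : Fin s) j, M i.succ j = H (d - 1 - (i : ℕ) + (j : ℕ))) :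
    M.det = y * rectDet G s d := by
  let B : Matrix (Fin (s + 1)) (Fin (s + 1)) R := Matrix.of fun i j =>
    Fin.cases (M i 0) (fun j => Fin.cases 0 (fun i : Fin s => G (d - (i : ℕ) + (j : ℕ))) i) j
  have hB : M.det = B.det := by
    apply Matrix.det_eq_of_forall_col_eq_smul_add_pred (fun _ => x)
    · intro i; simp [B]
    · intro i j
      refine Fin.cases ?_ (fun i => ?_) i
      · simp [B, h0, pow_succ]; ring
      · simp only [h1, B, Matrix.of_apply, Fin.cases_succ]
        rw [hHG]
        simp only [Fin.val_succ, Fin.val_castSucc]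
        push_cast
        congr 2 <;> [skip; congr 1] <;> ring
  rw [hB, Matrix.det_succ_row_zero, Fin.sum_univ_succ]
  simp only [Fin.val_zero, pow_zero, one_mul]
  rw [Finset.sum_eq_zero]
  · simp only [B, rectDet, Matrix.of_apply, Fin.cases_zero, h0]
    simp only [Fin.val_zero, pow_zero, mul_one, add_zero]
    congr 2
  · intro j _
    simp [B]

theorem rect_identity {R : Type*} [CommRing R] (H G : ℤ → R) (x : R)
    (hHG : ∀ m, H m = G m + x * H (m - 1)) (s : ℕ) (c : ℤ) :
    rectDet H (s + 1) c * rectDet G s c = rectDet H s c * rectDet G (s + 1) c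
      + x * rectDet H (s + 1) (c - 1) * rectDet G s (c + 1) := by
  let M : Matrix (Fin (s + 2)) (Fin (s + 2)) R := Matrix.of fun i j =>
    Fin.cases (x ^ (j : ℕ)) (fun i => H (c - 1 - (i : ℕ) + (j : ℕ))) i
  have hd := desnanot s M
  have a1 : M.det = rectDet G (s + 1) c := by
    rw [geom_det H G x hHG (s + 1) c 1 M (by intro j; simp [M]) (by intro i j; simp [M]), one_mul]
  have a2 : (M.submatrix Fin.castSucc Fin.castSucc).det = rectDet G s c := by
    rw [geom_det H G x hHG s c 1 _ (by intro j; simp [M])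
      (by intro i j; rw [Matrix.submatrix_apply, ← Fin.succ_castSucc]; simp [M]), one_mul]
  have a3 : (M.submatrix Fin.castSucc Fin.succ).det = x * rectDet G s (c + 1) := by
    rw [geom_det H G x hHG s (c + 1) x _ (by intro j; simp [M, pow_succ]; ring)
      (by
        intro i j; rw [Matrix.submatrix_apply, ← Fin.succ_castSucc]; simp [M]
        congr 1; ring)]
  have a4 : (M.submatrix Fin.succ Fin.castSucc).det = rectDet H (s + 1) (c - 1) := by
    unfold rectDet; congr 1
  have a5 : (M.submatrix Fin.succ Fin.succ).det = rectDet H (s + 1) c := by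
    unfold rectDet; congr 1
    ext i j
    simp [M]
    congr 1; ring
  have a6 : (M.submatrix (fun i : Fin s => i.succ.castSucc)
      (fun i : Fin s => i.succ.castSucc)).det = rectDet H s c := by
    unfold rectDet; congr 1
    ext i j
    rw [Matrix.submatrix_apply, ← Fin.succ_castSucc]
    simp [M]
    congr 1; ring
  rw [a1, a2, a3, a4, a5, a6] at hd
  linear_combination -hd
theorem tele_sum {R : Type*} [CommRing R] (H h : ℤ → R) (x : R)
    (hH : ∀ m, H m = h m + x * H (m - 1)) (L l t : ℤ) (hl : L ≤ l) :
    H (l + t) = ∑ m ∈ Finset.Icc L l, x ^ (l - m).toNat * h (m + t)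
      + x ^ (l - L + 1).toNat * H (L - 1 + t) := by
  induction l, hl using Int.leInduction with
  | base => simp [hH (L + t)]; congr 2; ring
  | succ l hl ih =>
    rw [hH, show l + 1 + t - 1 = l + t by ring, ih]
    have : Finset.Icc L (l + 1) = insert (l + 1) (Finset.Icc L l) := by
      ext; simp; omega
    rw [this, Finset.sum_insert (by simp)]
    have e : ∀ m ∈ Finset.Icc L l, x ^ (l + 1 - m).toNat * h (m + t)
        = x * (x ^ (l - m).toNat * h (m + t)) := by
      intro m hm
      rw [Finset.mem_Icc] at hm
      rw [show (l + 1 - m).toNat = (l - m).toNat + 1 by omega, pow_succ]; ring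
    rw [Finset.sum_congr rfl e, ← Finset.mul_sum,
      show (l + 1 - L + 1).toNat = (l - L + 1).toNat + 1 by omega, pow_succ]
    simp
    ring

/-- lower bounds in the interlacing condition -/
def lowB (k : ℕ) (lam : ℕ → ℤ) (i : ℕ) : ℤ := if i + 1 < k then lam (i + 1) else 0

/-- Jacobi–Trudi determinant -/
noncomputable def jtDet {R : Type*} [CommRing R] (H : ℤ → R) (k : ℕ) (lam : ℕ → ℤ) : R :=
  Matrix.det (Matrix.of fun i j : Fin k => H (lam i - (i : ℕ) + (j : ℕ)))

/-- extension of a finite sequence by zero -/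
def extZ {k : ℕ} (mu : Fin k → ℤ) (i : ℕ) : ℤ := if h : i < k then mu ⟨i, h⟩ else 0

theorem det_row_next {R : Type*} [CommRing R] (k : ℕ) (A B : Matrix (Fin k) (Fin k) R)
    (c : Fin k → R)
    (hlast : ∀ i j : Fin k, (i : ℕ) + 1 = k → A i j = B i j)
    (hnext : ∀ i i' j : Fin k, (i : ℕ) + 1 = i' → A i j = B i j + c i * A i' j) :
    A.det = B.det := by
  rcases k with _ | k
  · simp
  rw [← Matrix.det_submatrix_equiv_self Fin.revPerm A,
    ← Matrix.det_submatrix_equiv_self Fin.revPerm B]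
  apply Matrix.det_eq_of_forall_row_eq_smul_add_pred (fun i => c (Fin.rev i.succ))
  · intro j
    simp only [Matrix.submatrix_apply, Fin.revPerm_apply]
    apply hlast; simp [Fin.val_rev]
  · intro i j
    simp only [Matrix.submatrix_apply, Fin.revPerm_apply]
    apply hnext; simp [Fin.val_rev]; omega

theorem jt_branch {R : Type*} [CommRing R] (H h : ℤ → R) (x : R)
    (hH : ∀ m, H m = h m + x * H (m - 1)) (hneg : ∀ m, m < 0 → H m = 0)
    (k : ℕ) (lam : ℕ → ℤ) (hl : IsPartitionSeq k lam) :
    jtDet H k lam = ∑ mu ∈ Fintype.piFinset (fun i : Fin k => Finset.Icc (lowB k lam i) (lam i)),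
      (∏ i : Fin k, x ^ (lam i - mu i).toNat) * jtDet h k (extZ mu) := by
  let g : Fin k → ℤ → (Fin k → R) := fun i m =>
    x ^ (lam i - m).toNat • (fun j : Fin k => h (m - (i : ℕ) + (j : ℕ)))
  have hlow : ∀ i : Fin k, lowB k lam i ≤ lam i := by
    intro i
    unfold lowB
    split_ifs with h
    · exact hl.1 _ h
    · exact hl.2 _ i.2
  have h1 : jtDet H k lam = Matrix.det (Matrix.of fun i : Fin k =>
      ∑ m ∈ Finset.Icc (lowB k lam i) (lam i), g i m) := by
    have ht : ∀ i j : Fin k, H (lam i - (i : ℕ) + (j : ℕ)) =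
        (∑ m ∈ Finset.Icc (lowB k lam i) (lam i), g i m) j
        + x ^ (lam i - lowB k lam i + 1).toNat * H (lowB k lam i - 1 - (i : ℕ) + (j : ℕ)) := by
      intro i j
      have := tele_sum H h x hH (lowB k lam i) (lam i) (-(i : ℕ) + (j : ℕ)) (hlow i)
      rw [Finset.sum_apply]
      simp only [g, Pi.smul_apply, smul_eq_mul]
      simp only [← add_assoc, ← sub_eq_add_neg] at this
      exact this
    apply det_row_next k _ _ (fun i => x ^ (lam i - lowB k lam i + 1).toNat)
    · intro i j hi
      simp only [Matrix.of_apply]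
      rw [ht, hneg (lowB k lam i - 1 - (i : ℕ) + (j : ℕ)), mul_zero, add_zero]
      unfold lowB
      rw [if_neg (by omega)]
      have := j.2
      omega
    · intro i i' j hi
      simp only [Matrix.of_apply]
      rw [ht]
      congr 3
      have := i'.2
      unfold lowB
      rw [if_pos (by omega), hi]
      push_cast [← hi]
      ring
  rw [h1]
  have h2 := (Matrix.detRowAlternating (n := Fin k) (R := R)).toMultilinearMap.map_sum_finset g
    (fun i : Fin k => Finset.Icc (lowB k lam i) (lam i))
  refine h2.trans (Finset.sum_congr rfl fun mu _ => ?_)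
  have h3 := (Matrix.detRowAlternating (n := Fin k) (R := R)).toMultilinearMap.map_smul_univ
    (fun i => x ^ (lam i - mu i).toNat)
    (fun i : Fin k => (fun j : Fin k => h (mu i - (i : ℕ) + (j : ℕ))))
  refine h3.trans ?_
  rw [smul_eq_mul]
  congr 1
  unfold jtDet
  have : (Matrix.of fun i j : Fin k => h (extZ mu i - (i : ℕ) + (j : ℕ))) =
    (fun i : Fin k => (fun j : Fin k => h (mu i - (i : ℕ) + (j : ℕ)))) := by
    funext i j
    simp [extZ]
  rw [this]
  rfl

/-- generating function of complete homogeneous polynomials in `x_a, …, x_{a+N-1}` -/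
noncomputable def hSer (a N : ℕ) : PowerSeries (MvPolynomial ℕ ℤ) :=
  ∏ i ∈ Finset.range N, PowerSeries.mk (fun k => (MvPolynomial.X (a + i) : MvPolynomial ℕ ℤ) ^ k)

/-- complete homogeneous polynomials -/
noncomputable def hz (a N : ℕ) (m : ℤ) : MvPolynomial ℕ ℤ :=
  if m < 0 then 0 else PowerSeries.coeff m.toNat (hSer a N)

theorem hz_rec_aux {R : Type*} [CommRing R] (P Q : PowerSeries R) (x : R)
    (h : P = PowerSeries.mk (fun k => x ^ k) * Q) (m : ℤ) :
    (if m < 0 then 0 else PowerSeries.coeff m.toNat P) =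
    (if m < 0 then 0 else PowerSeries.coeff m.toNat Q) +
     x * (if m - 1 < 0 then 0 else PowerSeries.coeff (m - 1).toNat P) := by
  have h1 : PowerSeries.mk (fun k => x ^ k) =
      1 + PowerSeries.X * (PowerSeries.C x * PowerSeries.mk (fun k => x ^ k)) := by
    ext n
    rcases n with _ | n
    · simp
    · simp [PowerSeries.coeff_succ_X_mul, pow_succ, PowerSeries.coeff_one, mul_comm]
  have h2 : P = Q + PowerSeries.X * (PowerSeries.C x * P) := by
    conv_lhs => rw [h, h1]
    rw [h]; ring
  by_cases hm : m < 0
  · simp [hm, show m - 1 < 0 by omega]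
  · by_cases hm0 : m = 0
    · subst hm0
      have := congrArg (PowerSeries.coeff 0) h2
      simpa using this
    · have e : m.toNat = (m - 1).toNat + 1 := by omega
      rw [if_neg hm, if_neg hm, if_neg (by omega)]
      have := congrArg (PowerSeries.coeff m.toNat) h2
      rw [map_add] at this
      rw [this]
      congr 1
      rw [e, PowerSeries.coeff_succ_X_mul, PowerSeries.coeff_C_mul]

theorem hz_succ (a N : ℕ) (m : ℤ) :
    hz a (N + 1) m = hz a N m + MvPolynomial.X (a + N) * hz a (N + 1) (m - 1) := by
  apply hz_rec_aux
  rw [hSer, Finset.prod_range_succ, mul_comm]; rfl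

theorem hz_first (a N : ℕ) (m : ℤ) :
    hz a (N + 1) m = hz (a + 1) N m + MvPolynomial.X a * hz a (N + 1) (m - 1) := by
  apply hz_rec_aux
  rw [hSer, Finset.prod_range_succ', mul_comm]
  simp only [hSer, add_zero]
  congr 2
  funext i
  rw [show a + (i + 1) = a + 1 + i by ring]

theorem hz_neg (a N : ℕ) (m : ℤ) (h : m < 0) : hz a N m = 0 := by simp [hz, h]

theorem hz_zero (a : ℕ) (m : ℤ) : hz a 0 m = if m = 0 then 1 else 0 := by
  unfold hz hSer
  simp only [Finset.range_zero, Finset.prod_empty, PowerSeries.coeff_one]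
  split_ifs <;> first | rfl | omega

theorem jt_zero (a k : ℕ) (lam : ℕ → ℤ) (hl : IsPartitionSeq k lam) :
    jtDet (hz a 0) k lam = if ∀ i < k, lam i = 0 then 1 else 0 := by
  unfold jtDet
  rw [Matrix.det_of_isLowerTriangular]
  · split_ifs with h
    · apply Finset.prod_eq_one
      intro i _
      simp [hz_zero, h i i.2]
    · push Not at h
      obtain ⟨i, hi, h⟩ := h
      apply Finset.prod_eq_zero (Finset.mem_univ ⟨i, hi⟩)
      simp [hz_zero, h]
  · intro i j hij
    have : (i : ℕ) < j := by simpa using hij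
    have := hl.2 i i.2
    simp only [Matrix.of_apply, hz_zero]
    rw [if_neg (by omega)]
theorem IsPartitionSeq.anti {k : ℕ} {lam : ℕ → ℤ} (h : IsPartitionSeq k lam) {i j : ℕ}
    (hij : i ≤ j) (hj : j < k) : lam j ≤ lam i := by
  induction j, hij using Nat.le_induction with
  | base => exact le_rfl
  | succ j hij ih => exact (h.1 j hj).trans (ih (by omega))

theorem SSYT.ext_entry {k : ℕ} {lam : ℕ → ℤ} {a b : ℕ} {T U : SSYT k lam a b}
    (h : T.entry = U.entry) : T = U := by
  cases T; cases U; cases h; rfl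

instance SSYT.instFinite {k : ℕ} {lam : ℕ → ℤ} {a b : ℕ} : Finite (SSYT k lam a b) := by
  let f : SSYT k lam a b → ((i : Fin k) → Fin (lam i).toNat → Fin (b + 1)) := fun T i j =>
    ⟨T.entry i j, Nat.lt_succ_of_le (T.upper i j i.2 (by have := j.2; omega))⟩
  apply Finite.of_injective f
  intro T U h
  apply SSYT.ext_entry
  funext i j
  by_cases hij : i < k ∧ (j : ℤ) < lam i
  · have := congrFun (congrFun h ⟨i, hij.1⟩) ⟨j, by simp; omega⟩
    simpa [f] using this
  · rw [T.zero_outside i j hij, U.zero_outside i j hij]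

noncomputable instance SSYT.instFintype {k : ℕ} {lam : ℕ → ℤ} {a b : ℕ} :
    Fintype (SSYT k lam a b) := Fintype.ofFinite _

theorem exists_cut (p : ℕ → Prop) (n : ℕ) (hp : ∀ i j, i ≤ j → j < n → p j → p i) :
    ∃ m ≤ n, ∀ j < n, (p j ↔ j < m) := by
  classical
  have hex : ∃ j, n ≤ j ∨ ¬ p j := ⟨n, Or.inl le_rfl⟩
  refine ⟨Nat.find hex, Nat.find_min' hex (Or.inl le_rfl), fun j hj => ⟨fun h => ?_, fun h => ?_⟩⟩
  · by_contra hlt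
    push Not at hlt
    rcases Nat.find_spec hex with h1 | h1
    · omega
    · exact h1 (hp _ _ hlt hj h)
  · have := Nat.find_min hex h
    push Not at this
    exact this.2

/-- `mu` is the shape of the cells of `T` with entries at most `b`. -/
def SSYT.HasShape {k : ℕ} {lam : ℕ → ℤ} {a b : ℕ} (T : SSYT k lam a (b + 1))
    (mu : Fin k → ℤ) : Prop :=
  ∀ i : Fin k, 0 ≤ mu i ∧ mu i ≤ lam i ∧
    ∀ j : ℕ, (j : ℤ) < lam i → (T.entry i j ≤ b ↔ (j : ℤ) < mu i)

theorem SSYT.exists_shape {k : ℕ} {lam : ℕ → ℤ} (hl : IsPartitionSeq k lam) {a b : ℕ}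
    (T : SSYT k lam a (b + 1)) : ∃ mu, T.HasShape mu := by
  have : ∀ i : Fin k, ∃ m : ℤ, 0 ≤ m ∧ m ≤ lam i ∧
    ∀ j : ℕ, (j : ℤ) < lam i → (T.entry i j ≤ b ↔ (j : ℤ) < m) := by
    intro i
    obtain ⟨m, hm, h⟩ := exists_cut (fun j => T.entry i j ≤ b) (lam i).toNat (by
      intro j1 j2 h12 h2 h3
      exact (T.row_weak i j1 j2 i.2 h12 (by omega)).trans h3)
    have := hl.2 i i.2
    refine ⟨m, by omega, by omega, fun j hj => ?_⟩
    rw [h j (by omega)]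
    omega
  choose mu hmu using this
  exact ⟨mu, hmu⟩

theorem SSYT.HasShape.unique {k : ℕ} {lam : ℕ → ℤ} {a b : ℕ}
    {T : SSYT k lam a (b + 1)} {mu nu : Fin k → ℤ} (h1 : T.HasShape mu) (h2 : T.HasShape nu) :
    mu = nu := by
  funext i
  obtain ⟨a1, a2, a3⟩ := h1 i
  obtain ⟨b1, b2, b3⟩ := h2 i
  rcases lt_trichotomy (mu i) (nu i) with h | h | h
  · have e1 := a3 (mu i).toNat (by omega)
    have e2 := b3 (mu i).toNat (by omega)
    rw [e1] at e2; omega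
  · exact h
  · have e1 := a3 (nu i).toNat (by omega)
    have e2 := b3 (nu i).toNat (by omega)
    rw [e1] at e2; omega

theorem SSYT.HasShape.mem {k : ℕ} {lam : ℕ → ℤ} (hl : IsPartitionSeq k lam) {a b : ℕ}
    {T : SSYT k lam a (b + 1)} {mu : Fin k → ℤ} (h : T.HasShape mu) :
    mu ∈ Fintype.piFinset (fun i : Fin k => Finset.Icc (lowB k lam i) (lam i)) := by
  rw [Fintype.mem_piFinset]
  intro i
  rw [Finset.mem_Icc]
  obtain ⟨h1, h2, h3⟩ := h i
  refine ⟨?_, h2⟩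
  unfold lowB
  split_ifs with hi
  · by_contra hlt
    push Not at hlt
    have h4 := hl.1 _ hi
    have h5 := h3 (mu i).toNat (by omega)
    have h6 := T.col_strict i (i + 1) (mu i).toNat (by omega) hi (by omega)
    have h7 := T.upper (i + 1) (mu i).toNat hi (by omega)
    have h8 : T.entry i (mu i).toNat ≤ b := by omega
    rw [h5] at h8
    omega
  · exact h1

theorem extZ_of_lt {k : ℕ} (mu : Fin k → ℤ) {i : ℕ} (hi : i < k) : extZ mu i = mu ⟨i, hi⟩ := by
  simp [extZ, hi]

theorem extZ_partition {k : ℕ} {lam : ℕ → ℤ} (hl : IsPartitionSeq k lam) {mu : Fin k → ℤ}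
    (h : mu ∈ Fintype.piFinset (fun i : Fin k => Finset.Icc (lowB k lam i) (lam i))) :
    IsPartitionSeq k (extZ mu) := by
  rw [Fintype.mem_piFinset] at h
  simp only [Finset.mem_Icc] at h
  refine ⟨fun i hi => ?_, fun i hi => ?_⟩
  · rw [extZ_of_lt mu hi, extZ_of_lt mu (show i < k by omega)]
    have h1 := (h ⟨i, by omega⟩).1
    have h2 := (h ⟨i + 1, hi⟩).2
    simp only [lowB, if_pos hi] at h1
    exact h2.trans h1
  · rw [extZ_of_lt mu hi]
    have h1 := (h ⟨i, hi⟩).1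
    simp only [lowB] at h1
    split_ifs at h1 with h2
    · exact (hl.2 _ h2).trans h1
    · exact h1

/-- remove the entries `b + 1` -/
def SSYT.restrict {k : ℕ} {lam : ℕ → ℤ} (hl : IsPartitionSeq k lam) {a b : ℕ}
    (T : SSYT k lam a (b + 1)) (mu : Fin k → ℤ) (h : T.HasShape mu) :
    SSYT k (extZ mu) a b where
  entry i j := if i < k ∧ (j : ℤ) < extZ mu i then T.entry i j else 0
  zero_outside i j hij := by rw [if_neg hij]
  lower i j hi hj := by
    rw [if_pos ⟨hi, hj⟩]
    rw [extZ_of_lt mu hi] at hj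
    have := (h ⟨i, hi⟩).2.1
    exact T.lower i j hi (lt_of_lt_of_le hj this)
  upper i j hi hj := by
    rw [if_pos ⟨hi, hj⟩]
    rw [extZ_of_lt mu hi] at hj
    have := h ⟨i, hi⟩
    exact (this.2.2 j (lt_of_lt_of_le hj this.2.1)).2 hj
  row_weak i j₁ j₂ hi hj hj2 := by
    rw [if_pos ⟨hi, by omega⟩, if_pos ⟨hi, hj2⟩]
    rw [extZ_of_lt mu hi] at hj2
    have := h ⟨i, hi⟩
    exact T.row_weak i j₁ j₂ hi hj (lt_of_lt_of_le hj2 this.2.1)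
  col_strict i₁ i₂ j hi hi2 hj := by
    have hj' := hj
    rw [extZ_of_lt mu hi2] at hj'
    have h2 := h ⟨i₂, hi2⟩
    have hi1 : i₁ < k := by omega
    have h1 := h ⟨i₁, hi1⟩
    have e1 : (j : ℤ) < lam i₂ := lt_of_lt_of_le hj' h2.2.1
    have e2 := T.col_strict i₁ i₂ j hi hi2 e1
    have e3 : T.entry i₂ j ≤ b := (h2.2.2 j e1).2 hj'
    have e4 : (j : ℤ) < lam i₁ := lt_of_lt_of_le e1 (hl.anti hi.le hi2)
    have e5 := (h1.2.2 j e4).1 (by simp only; omega)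
    rw [if_pos ⟨hi1, by rw [extZ_of_lt mu hi1]; exact e5⟩, if_pos ⟨hi2, hj⟩]
    exact e2

/-- fill the remaining cells with `b + 1` -/
def SSYT.extend {k : ℕ} {lam : ℕ → ℤ} (hl : IsPartitionSeq k lam) {a b : ℕ} (hab : a ≤ b + 1)
    (mu : Fin k → ℤ)
    (hmu : mu ∈ Fintype.piFinset (fun i : Fin k => Finset.Icc (lowB k lam i) (lam i)))
    (U : SSYT k (extZ mu) a b) : SSYT k lam a (b + 1) where
  entry i j := if i < k ∧ (j : ℤ) < lam i then
    (if (j : ℤ) < extZ mu i then U.entry i j else b + 1) else 0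
  zero_outside i j hij := by rw [if_neg hij]
  lower i j hi hj := by
    rw [if_pos ⟨hi, hj⟩]
    split_ifs with h
    · exact U.lower i j hi h
    · exact hab
  upper i j hi hj := by
    rw [if_pos ⟨hi, hj⟩]
    split_ifs with h
    · exact (U.upper i j hi h).trans (Nat.le_succ _)
    · exact le_rfl
  row_weak i j₁ j₂ hi hj hj2 := by
    have c1 : i < k ∧ (j₁ : ℤ) < lam i := ⟨hi, by omega⟩
    have c2 : i < k ∧ (j₂ : ℤ) < lam i := ⟨hi, hj2⟩
    rw [if_pos c1, if_pos c2]
    split_ifs with h1 h2 h2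
    · exact U.row_weak i j₁ j₂ hi hj h2
    · exact (U.upper i j₁ hi h1).trans (Nat.le_succ _)
    · omega
    · exact le_rfl
  col_strict i₁ i₂ j hi hi2 hj := by
    rw [Fintype.mem_piFinset] at hmu
    simp only [Finset.mem_Icc] at hmu
    have hi1 : i₁ < k := by omega
    have e4 : (j : ℤ) < lam i₁ := lt_of_lt_of_le hj (hl.anti hi.le hi2)
    have e5 : (j : ℤ) < extZ mu i₁ := by
      rw [extZ_of_lt mu hi1]
      have := (hmu ⟨i₁, hi1⟩).1
      simp only [lowB, if_pos (show i₁ + 1 < k by omega)] at this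
      have := hl.anti (show i₁ + 1 ≤ i₂ by omega) hi2
      omega
    rw [if_pos ⟨hi1, e4⟩, if_pos e5, if_pos ⟨hi2, hj⟩]
    split_ifs with h
    · exact U.col_strict i₁ i₂ j hi hi2 h
    · exact Nat.lt_succ_of_le (U.upper i₁ j hi1 e5)

theorem SSYT.extend_shape {k : ℕ} {lam : ℕ → ℤ} (hl : IsPartitionSeq k lam) {a b : ℕ}
    (hab : a ≤ b + 1) (mu : Fin k → ℤ)
    (hmu : mu ∈ Fintype.piFinset (fun i : Fin k => Finset.Icc (lowB k lam i) (lam i)))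
    (U : SSYT k (extZ mu) a b) : (U.extend hl hab mu hmu).HasShape mu := by
  intro i
  have hp := (extZ_partition hl hmu).2 i i.2
  rw [extZ_of_lt mu i.2] at hp
  refine ⟨hp, ?_, ?_⟩
  · rw [Fintype.mem_piFinset] at hmu
    exact (Finset.mem_Icc.1 (hmu i)).2
  · intro j hj
    simp only [SSYT.extend]
    rw [if_pos ⟨i.2, hj⟩]
    have := extZ_of_lt mu i.2
    split_ifs with h
    · have := U.upper i j i.2 h
      simp only [this, true_iff]
      rw [extZ_of_lt mu i.2] at h
      exact h
    · rw [extZ_of_lt mu i.2] at h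
      simp only [Fin.eta] at h
      simp [h]

theorem SSYT.weight_restrict {k : ℕ} {lam : ℕ → ℤ} (hl : IsPartitionSeq k lam) {a b : ℕ}
    (T : SSYT k lam a (b + 1)) (mu : Fin k → ℤ) (h : T.HasShape mu) :
    T.weight = (∏ i : Fin k, (MvPolynomial.X (b + 1) : MvPolynomial ℕ ℤ) ^ (lam i - mu i).toNat) *
      (T.restrict hl mu h).weight := by
  unfold SSYT.weight
  rw [Finset.prod_range, Finset.prod_range, ← Finset.prod_mul_distrib]
  refine Finset.prod_congr rfl fun i _ => ?_
  obtain ⟨h1, h2, h3⟩ := h i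
  have e : extZ mu i = mu i := extZ_of_lt mu i.2
  rw [e, ← Finset.prod_range_mul_prod_Ico _ (show (mu i).toNat ≤ (lam i).toNat by omega), mul_comm]
  congr 1
  · rw [Finset.prod_congr rfl (g := fun _ => (MvPolynomial.X (b + 1) : MvPolynomial ℕ ℤ))]
    · rw [Finset.prod_const, Nat.card_Ico]
      congr 1; omega
    · intro j hj
      rw [Finset.mem_Ico] at hj
      have a1 := T.upper i j i.2 (by omega)
      have a2 := h3 j (by omega)
      congr 1
      have : ¬ (T.entry i j ≤ b) := by rw [a2]; omega
      omega
  · refine Finset.prod_congr rfl fun j hj => ?_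
    rw [Finset.mem_range] at hj
    simp only [SSYT.restrict]
    rw [if_pos ⟨i.2, by rw [e]; omega⟩]

theorem ssyt_branch {k : ℕ} {lam : ℕ → ℤ} (hl : IsPartitionSeq k lam) {a b : ℕ}
    (hab : a ≤ b + 1) :
    ∑ T : SSYT k lam a (b + 1), T.weight =
      ∑ mu ∈ Fintype.piFinset (fun i : Fin k => Finset.Icc (lowB k lam i) (lam i)),
        (∏ i : Fin k, (MvPolynomial.X (b + 1) : MvPolynomial ℕ ℤ) ^ (lam i - mu i).toNat) *
          ∑ U : SSYT k (extZ mu) a b, U.weight := by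
  classical
  choose sh hsh using fun T : SSYT k lam a (b + 1) => T.exists_shape hl
  rw [← Finset.sum_fiberwise_of_maps_to (g := sh) (fun T _ => (hsh T).mem hl)]
  refine Finset.sum_congr rfl fun mu hmu => ?_
  rw [Finset.mul_sum]
  have hS : ∀ T ∈ Finset.univ.filter (fun T => sh T = mu), T.HasShape mu := by
    intro T hT
    rw [Finset.mem_filter] at hT
    rw [← hT.2]; exact hsh T
  refine Finset.sum_bij' (fun T hT => T.restrict hl mu (hS T hT))
    (fun U _ => U.extend hl hab mu hmu) (fun _ _ => Finset.mem_univ _) ?_ ?_ ?_ ?_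
  · intro U _
    rw [Finset.mem_filter]
    exact ⟨Finset.mem_univ _, (hsh _).unique (U.extend_shape hl hab mu hmu)⟩
  · intro T hT
    apply SSYT.ext_entry
    funext i j
    simp only [SSYT.extend, SSYT.restrict]
    by_cases hij : i < k ∧ (j : ℤ) < lam i
    · rw [if_pos hij]
      have h1 := hS T hT ⟨i, hij.1⟩
      have h2 := h1.2.2 j hij.2
      have h3 := T.upper i j hij.1 hij.2
      rw [extZ_of_lt mu hij.1]
      simp only at h2
      split_ifs with h4 h5
      · rfl
      · exact absurd ⟨hij.1, h4⟩ h5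
      · rw [← h2] at h4; omega
    · rw [if_neg hij, T.zero_outside i j hij]
  · intro U _
    apply SSYT.ext_entry
    funext i j
    simp only [SSYT.extend, SSYT.restrict]
    by_cases hij : i < k ∧ (j : ℤ) < extZ mu i
    · rw [if_pos hij, if_pos hij.2, if_pos]
      refine ⟨hij.1, lt_of_lt_of_le hij.2 ?_⟩
      rw [extZ_of_lt mu hij.1]
      rw [Fintype.mem_piFinset] at hmu
      exact (Finset.mem_Icc.1 (hmu ⟨i, hij.1⟩)).2
    · rw [if_neg hij, U.zero_outside i j hij]
  · intro T hT
    exact T.weight_restrict hl mu (hS T hT)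

theorem ssyt_empty {k : ℕ} {lam : ℕ → ℤ} (hl : IsPartitionSeq k lam) (b : ℕ) :
    ∑ T : SSYT k lam (b + 1) b, T.weight = if ∀ i < k, lam i = 0 then 1 else 0 := by
  split_ifs with h
  · let T0 : SSYT k lam (b + 1) b :=
      { entry := fun _ _ => 0
        zero_outside := fun _ _ _ => rfl
        lower := fun i j hi hj => by have := h i hi; omega
        upper := fun i j hi hj => by have := h i hi; omega
        row_weak := fun i _ j hi _ hj => by have := h i hi; omega
        col_strict := fun _ i j _ hi hj => by have := h i hi; omega }
    rw [Fintype.sum_eq_single T0]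
    · unfold SSYT.weight
      refine Finset.prod_eq_one fun i hi => ?_
      rw [h i (Finset.mem_range.1 hi)]; simp
    · intro T hT
      exfalso
      apply hT
      apply SSYT.ext_entry
      funext i j
      rw [T.zero_outside i j]
      rintro ⟨hi, hj⟩
      have := h i hi; omega
  · push Not at h
    obtain ⟨i, hi, h⟩ := h
    have := hl.2 i hi
    refine Finset.sum_eq_zero fun T _ => ?_
    have h1 := T.lower i 0 hi (by push_cast; omega)
    have h2 := T.upper i 0 hi (by push_cast; omega)
    omega

theorem jacobi_trudi (k a N : ℕ) (lam : ℕ → ℤ) (hl : IsPartitionSeq k lam) :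
    ∑ T : SSYT k lam (a + 1) (a + N), T.weight = jtDet (hz (a + 1) N) k lam := by
  induction N generalizing lam with
  | zero => rw [jt_zero _ _ _ hl]; exact ssyt_empty hl a
  | succ N ih =>
    rw [jt_branch (hz (a + 1) (N + 1)) (hz (a + 1) N) _ (hz_succ (a + 1) N)
      (fun m hm => hz_neg _ _ m hm) k lam hl]
    refine (ssyt_branch hl (b := a + N) (by omega)).trans ?_
    refine Finset.sum_congr rfl fun mu hmu => ?_
    rw [ih _ (extZ_partition hl hmu), show a + N + 1 = a + 1 + N by ring]

theorem schur_rect (k a N : ℕ) (c : ℤ) (hc : 0 ≤ c) :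
    schur k (fun _ => c) (a + 1) (a + N) = rectDet (hz (a + 1) N) k c := by
  have hl : IsPartitionSeq k (fun _ => c) := ⟨fun _ _ => le_rfl, fun _ _ => hc⟩
  unfold schur
  rw [if_pos hl, finsum_eq_sum_of_fintype, jacobi_trudi k a N _ hl]
  rfl

/-- for `c, r ≥ 1` and `n ≥ r`:
`s^{[n]}_{c^r} · s^{[2,n]}_{c^{r-1}} = s^{[n]}_{c^{r-1}} · s^{[2,n]}_{c^r}
 + x_1 · s^{[n]}_{(c-1)^r} · s^{[2,n]}_{(c+1)^{r-1}}`. -/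
theorem stmt_13 (c r n : ℕ) (hc : 1 ≤ c) (hr : 1 ≤ r) (hn : r ≤ n) :
    schur r (fun _ => (c : ℤ)) 1 n * schur (r - 1) (fun _ => (c : ℤ)) 2 n =
      schur (r - 1) (fun _ => (c : ℤ)) 1 n * schur r (fun _ => (c : ℤ)) 2 n +
        MvPolynomial.X 1 * schur r (fun _ => (c : ℤ) - 1) 1 n *
          schur (r - 1) (fun _ => (c : ℤ) + 1) 2 n := by
  obtain ⟨s, rfl⟩ : ∃ s, r = s + 1 := ⟨r - 1, by omega⟩
  obtain ⟨N, rfl⟩ : ∃ N, n = N + 1 := ⟨n - 1, by omega⟩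
  have h1 : ∀ k (d : ℤ), 0 ≤ d →
      schur k (fun _ => d) 1 (N + 1) = rectDet (hz 1 (N + 1)) k d := by
    intro k d hd
    have := schur_rect k 0 (N + 1) d hd
    simpa using this
  have h2 : ∀ k (d : ℤ), 0 ≤ d → schur k (fun _ => d) 2 (N + 1) = rectDet (hz 2 N) k d := by
    intro k d hd
    have := schur_rect k 1 N d hd
    rw [add_comm 1 N] at this
    exact this
  rw [Nat.add_sub_cancel, h1 _ _ (by omega), h1 _ _ (by omega), h1 _ _ (by omega),
    h2 _ _ (by omega), h2 _ _ (by omega), h2 _ _ (by omega)]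
  exact rect_identity _ _ _ (hz_first 1 N) s c
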